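/- (Corollary 4.) Let Z_k = (X_k,Y_k), k ≥ 1, be random variables with values in [0,1]^d × [0,1]^d such that X_k and Y_k have the same distribution for every k ≥ 1. Let 𝒜_k be the σ-algebra generated by Z_k and α(ℓ) = sup_{|j−k| ≥ ℓ} α(𝒜_j,𝒜_k). If Σ_{ℓ=1}^∞ α(ℓ) < ∞, then there is a constant C > 0 (depending only on d and Σ_ℓ α(ℓ)) such that for all n ≥ 2, the empirical measures μ_n = (1/n)Σ_{k=1}^n δ_{X_k} and ν_n = (1/n)Σ_{k=1}^n δ_{Y_k} satisfy E(W₁(μ_n,ν_n)) ≤ C/√n if d = 1; ≤ C·√(log n / n) if d = 2; and ≤ C/n^{1/d} if d ≥ 3. -/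

import Mathlib

open MeasureTheory ProbabilityTheory Real ENNReal

noncomputable section

/-- The Rosenblatt mixing coefficient `α(𝒜₁, 𝒜₂)` of two sub-σ-algebras. -/
def rosenblattAlpha {Ω : Type*} [MeasurableSpace Ω] (P : Measure Ω)
    (m1 m2 : MeasurableSpace Ω) : ℝ :=
  sSup {r | ∃ A B : Set Ω, MeasurableSet[m1] A ∧ MeasurableSet[m2] B ∧
    r = |(P (A ∩ B)).toReal - (P A).toReal * (P B).toReal|}

/-- The mixing sequence `α(ℓ) = sup_{|j−k| ≥ ℓ} α(σ(Z_j), σ(Z_k))` of a sequence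
of random variables. -/
def mixingSeq {Ω : Type*} [MeasurableSpace Ω] (P : Measure Ω)
    {E : Type*} [MeasurableSpace E] (Z : ℕ → Ω → E) (ℓ : ℕ) : ℝ :=
  sSup {r | ∃ j k : ℕ, ℓ ≤ Nat.dist j k ∧
    r = rosenblattAlpha P (MeasurableSpace.comap (Z j) inferInstance)
          (MeasurableSpace.comap (Z k) inferInstance)}

/-- Euclidean distance on `Fin d → ℝ`. -/
def euclidDist {d : ℕ} (x y : Fin d → ℝ) : ℝ := Real.sqrt (∑ i, (x i - y i) ^ 2)

/-- `γ` is a coupling of `μ` and `ν`. -/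
def IsCoupling {α : Type*} [MeasurableSpace α]
    (γ : Measure (α × α)) (μ ν : Measure α) : Prop :=
  γ.map Prod.fst = μ ∧ γ.map Prod.snd = ν

/-- Optimal transport cost for a cost function `c`. -/
def transportCost {α : Type*} [MeasurableSpace α] (c : α → α → ℝ)
    (μ ν : Measure α) : ℝ≥0∞ :=
  ⨅ (γ : Measure (α × α)) (_ : IsCoupling γ μ ν),
    ∫⁻ p, ENNReal.ofReal (c p.1 p.2) ∂γ

/-- Euclidean Kantorovich distance `W₁`. -/
def W1 {d : ℕ} (μ ν : Measure (Fin d → ℝ)) : ℝ≥0∞ := transportCost euclidDist μ ν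

/-- The empirical measure `(1/n) Σ_{k<n} δ_{X_k(ω)}` of a sequence. -/
def empMeasure {d : ℕ} {Ω : Type*} [MeasurableSpace Ω]
    (X : ℕ → Ω → (Fin d → ℝ)) (n : ℕ) (ω : Ω) : Measure (Fin d → ℝ) :=
  (n : ℝ≥0∞)⁻¹ • ∑ k ∈ Finset.range n, Measure.dirac (X k ω)

/-!
For two samples of equal size, Hall's marriage theorem yields Kantorovich duality: `W₁` is at most
the supremum over `1`-Lipschitz `F` of the mean of `F (X k) - F (Y k)`. Rounding the samples to the
grid of mesh `1/N` costs at most `2√d/N`. The grid lies in the torus `(ℤ/2N)^d`, to which `F`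
extends by reflection with the same Lipschitz bound, so Plancherel and Cauchy–Schwarz bound the
pairing by the `H⁻¹` norm `√(∑ ‖D m‖² / ‖m‖²)` of the signed empirical measure, where `D m` are its
Fourier coefficients. Each `D m` is a sum of `n` centred bounded functions of the pairs `Z k`, so
the covariance inequality for mixing coefficients gives `E ‖D m‖² = O(n)`. Finally
`∑_{0 < ‖m‖ ≤ N} ‖m‖⁻²` is `O(1)`, `O(log N)`, `O(N^(d-2))` for `d = 1`, `d = 2`, `d ≥ 3`, and the
two errors balance for `N = n`, `N = n`, `N = ⌈n^(1/d)⌉`.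
-/

section Duality

/-- Feasible pairs of the dual of the assignment problem with cost matrix `c`. -/
def IsDualFeasible {ι : Type*} (c : ι → ι → ℝ) (φ ψ : ι → ℝ) : Prop :=
  ∀ i j, φ i + ψ j ≤ c i j

variable {ι : Type*} [Fintype ι]

-- Hall's condition holds for the almost tight pairs: a set `S` violating it could be exploited by
-- raising `φ` by `δ` on `S` and lowering `ψ` by `δ` on its neighbours.
lemma IsDualFeasible.exists_perm_le {c : ι → ι → ℝ} {φ ψ : ι → ℝ} {δ : ℝ} (hδ : 0 < δ)
    (hφψ : IsDualFeasible c φ ψ)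
    (hmax : ∀ φ' ψ', IsDualFeasible c φ' ψ' →
      ∑ i, φ' i + ∑ i, ψ' i < ∑ i, φ i + ∑ i, ψ i + δ) :
    ∃ σ : Equiv.Perm ι, ∀ i, c i (σ i) ≤ φ i + ψ (σ i) + δ := by
  classical
  let tight (i : ι) : Finset ι := {j | c i j ≤ φ i + ψ j + δ}
  suffices hall : ∀ S : Finset ι, S.card ≤ (S.biUnion tight).card by
    obtain ⟨f, f_inj, hf⟩ :=
      (Finset.all_card_le_biUnion_card_iff_exists_injective tight).1 hall
    exact ⟨.ofBijective f (Finite.injective_iff_bijective.1 f_inj),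
      fun i => (Finset.mem_filter.1 (hf i)).2⟩
  intro S
  by_contra! hS
  let φ' (i : ι) : ℝ := φ i + if i ∈ S then δ else 0
  let ψ' (j : ι) : ℝ := ψ j - if j ∈ S.biUnion tight then δ else 0
  have feasible : IsDualFeasible c φ' ψ' := by
    intro i j
    have hij := hφψ i j
    by_cases hi : i ∈ S <;> by_cases hj : j ∈ S.biUnion tight <;>
      simp only [φ', ψ', hi, hj, if_true, if_false]
    · linarith
    · have : j ∉ tight i := fun h => hj (Finset.mem_biUnion.2 ⟨i, hi, h⟩)
      simp only [tight, Finset.mem_filter_univ, not_le] at this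
      linarith
    · linarith
    · linarith
  have gain : ∑ i, φ' i + ∑ j, ψ' j
      = ∑ i, φ i + ∑ j, ψ j + ((S.card : ℝ) - (S.biUnion tight).card) * δ := by
    simp only [φ', ψ', Finset.sum_add_distrib, Finset.sum_sub_distrib, Finset.sum_ite_mem,
      Finset.univ_inter, Finset.sum_const, nsmul_eq_mul]
    ring
  have card_gap : ((S.biUnion tight).card : ℝ) + 1 ≤ S.card := mod_cast hS
  nlinarith [hmax φ' ψ' feasible]

lemma exists_isDualFeasible_almost_maximal (c : ι → ι → ℝ) {R δ : ℝ} (hδ : 0 < δ)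
    (hR : ∀ φ ψ, IsDualFeasible c φ ψ → ∑ i, φ i + ∑ i, ψ i ≤ R) :
    ∃ φ ψ, IsDualFeasible c φ ψ ∧ ∀ φ' ψ', IsDualFeasible c φ' ψ' →
      ∑ i, φ' i + ∑ i, ψ' i < ∑ i, φ i + ∑ i, ψ i + δ := by
  let values : Set ℝ := {v | ∃ φ ψ, IsDualFeasible c φ ψ ∧ v = ∑ i, φ i + ∑ i, ψ i}
  have bdd : BddAbove values := ⟨R, by rintro _ ⟨φ, ψ, h, rfl⟩; exact hR φ ψ h⟩
  have feasible : IsDualFeasible c (fun i => -∑ j, |c i j|) 0 := fun i j => by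
    have := Finset.single_le_sum (fun j _ => abs_nonneg (c i j)) (Finset.mem_univ j)
    simpa using by linarith [neg_abs_le (c i j)]
  have nonempty : values.Nonempty := ⟨_, _, _, feasible, rfl⟩
  obtain ⟨_, ⟨φ, ψ, hφψ, rfl⟩, hlt⟩ :=
    exists_lt_of_lt_csSup nonempty (sub_lt_self (sSup values) hδ)
  exact ⟨φ, ψ, hφψ, fun φ' ψ' h => by linarith [le_csSup bdd ⟨φ', ψ', h, rfl⟩]⟩

theorem exists_perm_sum_le_of_dual_le (c : ι → ι → ℝ) {R : ℝ}
    (hR : ∀ φ ψ, IsDualFeasible c φ ψ → ∑ i, φ i + ∑ i, ψ i ≤ R) :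
    ∃ σ : Equiv.Perm ι, ∑ i, c i (σ i) ≤ R := by
  classical
  obtain ⟨σ, σ_min⟩ := Finite.exists_min fun σ : Equiv.Perm ι => ∑ i, c i (σ i)
  refine ⟨σ, le_of_forall_pos_le_add fun ε hε => ?_⟩
  have card_pos : (0 : ℝ) < Fintype.card ι + 1 := by positivity
  have hδ : 0 < ε / (Fintype.card ι + 1) := div_pos hε card_pos
  obtain ⟨φ, ψ, hφψ, hmax⟩ := exists_isDualFeasible_almost_maximal c hδ hR
  obtain ⟨τ, hτ⟩ := hφψ.exists_perm_le hδ hmax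
  calc ∑ i, c i (σ i) ≤ ∑ i, c i (τ i) := σ_min τ
    _ ≤ ∑ i, (φ i + ψ (τ i) + ε / (Fintype.card ι + 1)) := Finset.sum_le_sum fun i _ => hτ i
    _ = ∑ i, φ i + ∑ i, ψ i + Fintype.card ι * (ε / (Fintype.card ι + 1)) := by
        simp only [Finset.sum_add_distrib, Equiv.sum_comp τ ψ, Finset.sum_const, Finset.card_univ,
          nsmul_eq_mul]
    _ ≤ R + ε := by
        gcongr
        · exact hR φ ψ hφψ
        · rw [mul_div_assoc', div_le_iff₀ card_pos]
          nlinarith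

variable {α : Type*}

-- The potential is the `c`-transform `a ↦ min_j (c a (y j) - ψ j)` of a feasible `ψ`.
lemma exists_perm_sum_le_of_lipschitz [Nonempty ι] {c : α → α → ℝ} (c_self : ∀ a, c a a = 0)
    (c_triangle : ∀ a b b', c a b' ≤ c a b + c b b') (x y : ι → α) {R : ℝ}
    (hR : ∀ F : α → ℝ, (∀ a b, F a - F b ≤ c a b) → ∑ i, (F (x i) - F (y i)) ≤ R) :
    ∃ σ : Equiv.Perm ι, ∑ i, c (x i) (y (σ i)) ≤ R := by
  refine exists_perm_sum_le_of_dual_le (fun i j => c (x i) (y j)) fun φ ψ hφψ => ?_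
  let F (a : α) : ℝ := Finset.univ.inf' Finset.univ_nonempty fun j => c a (y j) - ψ j
  have F_le (a : α) (j : ι) : F a ≤ c a (y j) - ψ j := Finset.inf'_le _ (Finset.mem_univ j)
  have F_lip (a b : α) : F a - F b ≤ c a b := by
    rw [sub_le_comm]
    refine Finset.le_inf' _ _ fun j _ => ?_
    linarith [F_le a j, c_triangle a b (y j)]
  have φ_le (i : ι) : φ i ≤ F (x i) := Finset.le_inf' _ _ fun j _ => by linarith [hφψ i j]
  have F_le_neg (i : ι) : F (y i) ≤ -ψ i := by simpa [c_self] using F_le (y i) i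
  calc ∑ i, φ i + ∑ i, ψ i = ∑ i, (φ i + ψ i) := Finset.sum_add_distrib.symm
    _ ≤ ∑ i, (F (x i) - F (y i)) :=
        Finset.sum_le_sum fun i _ => by linarith [φ_le i, F_le_neg i]
    _ ≤ R := hR F F_lip

variable [MeasurableSpace α]

lemma isCoupling_smul_sum_dirac (w : ℝ≥0∞) (x y : ι → α) (σ : Equiv.Perm ι) :
    IsCoupling (w • ∑ i, Measure.dirac (x i, y (σ i)))
      (w • ∑ i, Measure.dirac (x i)) (w • ∑ i, Measure.dirac (y i)) := by
  constructor
  · simp only [Measure.map_smul, Measure.map_finset_sum measurable_fst.aemeasurable,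
      Measure.map_dirac' measurable_fst]
  · simp only [Measure.map_smul, Measure.map_finset_sum measurable_snd.aemeasurable,
      Measure.map_dirac' measurable_snd, Equiv.sum_comp σ fun i => Measure.dirac (y i)]

lemma transportCost_smul_sum_dirac_le [MeasurableSingletonClass α] (c : α → α → ℝ) (w : ℝ≥0∞)
    (x y : ι → α) (σ : Equiv.Perm ι) :
    transportCost c (w • ∑ i, Measure.dirac (x i)) (w • ∑ i, Measure.dirac (y i))
      ≤ w * ∑ i, ENNReal.ofReal (c (x i) (y (σ i))) := by
  refine (iInf₂_le (w • ∑ i, Measure.dirac (x i, y (σ i)))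
    (isCoupling_smul_sum_dirac w x y σ)).trans_eq ?_
  rw [lintegral_smul_measure, lintegral_finsetSum_measure, smul_eq_mul]
  simp only [lintegral_dirac]

theorem transportCost_uniform_le_of_lipschitz [Nonempty ι] [MeasurableSingletonClass α]
    {c : α → α → ℝ} (c_nonneg : ∀ a b, 0 ≤ c a b) (c_self : ∀ a, c a a = 0)
    (c_triangle : ∀ a b b', c a b' ≤ c a b + c b b') (x y : ι → α) {R : ℝ}
    (hR : ∀ F : α → ℝ, (∀ a b, F a - F b ≤ c a b) →
      (Fintype.card ι : ℝ)⁻¹ * ∑ i, (F (x i) - F (y i)) ≤ R) :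
    transportCost c ((Fintype.card ι : ℝ≥0∞)⁻¹ • ∑ i, Measure.dirac (x i))
      ((Fintype.card ι : ℝ≥0∞)⁻¹ • ∑ i, Measure.dirac (y i)) ≤ ENNReal.ofReal R := by
  have card_pos : (0 : ℝ) < Fintype.card ι := mod_cast Fintype.card_pos
  obtain ⟨σ, hσ⟩ := exists_perm_sum_le_of_lipschitz c_self c_triangle x y
    fun F hF => (inv_mul_le_iff₀ card_pos).1 (hR F hF)
  calc _ ≤ (Fintype.card ι : ℝ≥0∞)⁻¹ * ∑ i, ENNReal.ofReal (c (x i) (y (σ i))) :=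
        transportCost_smul_sum_dirac_le c _ x y σ
    _ = ENNReal.ofReal ((Fintype.card ι : ℝ)⁻¹ * ∑ i, c (x i) (y (σ i))) := by
        rw [ENNReal.ofReal_mul (by positivity), ENNReal.ofReal_inv_of_pos card_pos,
          ENNReal.ofReal_natCast, ENNReal.ofReal_sum_of_nonneg fun i _ => c_nonneg _ _]
    _ ≤ ENNReal.ofReal R := ENNReal.ofReal_le_ofReal ((inv_mul_le_iff₀ card_pos).2 hσ)

end Duality

section EuclidDist

variable {d : ℕ}

lemma euclidDist_eq_dist (x y : Fin d → ℝ) :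
    euclidDist x y = dist (WithLp.toLp 2 x) (WithLp.toLp 2 y) := by
  simp only [euclidDist, EuclideanSpace.dist_eq, Real.dist_eq, sq_abs]

lemma euclidDist_nonneg (x y : Fin d → ℝ) : 0 ≤ euclidDist x y := Real.sqrt_nonneg _

lemma euclidDist_self (x : Fin d → ℝ) : euclidDist x x = 0 := by
  rw [euclidDist_eq_dist, dist_self]

lemma euclidDist_comm (x y : Fin d → ℝ) : euclidDist x y = euclidDist y x := by
  simp only [euclidDist_eq_dist, dist_comm]

lemma euclidDist_triangle (x y z : Fin d → ℝ) :
    euclidDist x z ≤ euclidDist x y + euclidDist y z := by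
  simp only [euclidDist_eq_dist, dist_triangle]

lemma euclidDist_le_sqrt_mul {x y : Fin d → ℝ} {r : ℝ} (hr : 0 ≤ r)
    (h : ∀ i, |x i - y i| ≤ r) : euclidDist x y ≤ √d * r := by
  rw [euclidDist, ← Real.sqrt_sq hr, ← Real.sqrt_mul (Nat.cast_nonneg d)]
  refine Real.sqrt_le_sqrt ?_
  calc ∑ i, (x i - y i) ^ 2 ≤ ∑ _i : Fin d, r ^ 2 :=
        Finset.sum_le_sum fun i _ => sq_le_sq.2 ((h i).trans (le_abs_self r))
    _ = d * r ^ 2 := by simp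

theorem W1_empMeasure_le_of_lipschitz {Ω : Type*} [MeasurableSpace Ω] (X Y : ℕ → Ω → Fin d → ℝ)
    {n : ℕ} (hn : n ≠ 0) (ω : Ω) {R : ℝ}
    (hR : ∀ F : (Fin d → ℝ) → ℝ, (∀ a b, F a - F b ≤ euclidDist a b) →
      (n : ℝ)⁻¹ * ∑ k ∈ Finset.range n, (F (X k ω) - F (Y k ω)) ≤ R) :
    W1 (empMeasure X n ω) (empMeasure Y n ω) ≤ ENNReal.ofReal R := by
  have : NeZero n := ⟨hn⟩
  simp only [Finset.sum_range] at hR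
  simpa only [W1, empMeasure, Finset.sum_range, Fintype.card_fin] using
    transportCost_uniform_le_of_lipschitz euclidDist_nonneg euclidDist_self euclidDist_triangle
      (fun k : Fin n => X k ω) (fun k => Y k ω) (by simpa only [Fintype.card_fin] using hR)

end EuclidDist

section FiniteFourier

variable {G : Type*} [AddCommGroup G] {ι : Type*} [Fintype ι]

/-- Fourier multiplier of the discrete Laplacian with steps `e i`. -/
def laplaceSymbol (e : ι → G) (ψ : AddChar G ℂ) : ℝ := ∑ i, ‖ψ (e i) - 1‖ ^ 2

lemma laplaceSymbol_nonneg (e : ι → G) (ψ : AddChar G ℂ) : 0 ≤ laplaceSymbol e ψ :=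
  Finset.sum_nonneg fun _ _ => sq_nonneg _

section Plancherel

variable [Fintype G]

/-- Unnormalised Fourier transform of a function on a finite abelian group. -/
def addFourier (f : G → ℂ) (ψ : AddChar G ℂ) : ℂ := ∑ x, f x * ψ (-x)

lemma sum_addFourier_mul (f : G → ℂ) (x : G) :
    ∑ ψ, addFourier f ψ * ψ x = Fintype.card G * f x := by
  classical
  simp only [addFourier, Finset.sum_mul]
  rw [Finset.sum_comm]
  have orthogonality (y : G) :
      ∑ ψ : AddChar G ℂ, f y * ψ (-y) * ψ x = if y = x then Fintype.card G * f y else 0 := by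
    have (ψ : AddChar G ℂ) : f y * ψ (-y) * ψ x = f y * ψ (x - y) := by
      rw [mul_assoc, ← AddChar.map_add_eq_mul, neg_add_eq_sub]
    simp only [this, ← Finset.mul_sum, AddChar.sum_apply_eq_ite, sub_eq_zero, eq_comm (a := x),
      mul_ite, mul_zero, mul_comm]
  simp only [orthogonality, Finset.sum_ite_eq', Finset.mem_univ, if_true]

theorem sum_norm_sq_addFourier (f : G → ℂ) :
    ∑ ψ, ‖addFourier f ψ‖ ^ 2 = Fintype.card G * ∑ x, ‖f x‖ ^ 2 := by
  have conj_addFourier (ψ : AddChar G ℂ) :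
      starRingEnd ℂ (addFourier f ψ) = ∑ x, starRingEnd ℂ (f x) * ψ x := by
    simp only [addFourier, map_sum, map_mul, AddChar.map_neg_eq_conj, Complex.conj_conj]
  have : (∑ ψ, (‖addFourier f ψ‖ : ℂ) ^ 2) = Fintype.card G * ∑ x, (‖f x‖ : ℂ) ^ 2 := by
    simp only [← Complex.mul_conj', conj_addFourier, Finset.mul_sum]
    rw [Finset.sum_comm]
    refine Finset.sum_congr rfl fun x _ => ?_
    rw [← mul_assoc, ← sum_addFourier_mul, Finset.sum_mul]
    exact Finset.sum_congr rfl fun ψ _ => by ring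
  exact_mod_cast this

lemma addFourier_shift_sub (f : G → ℂ) (a : G) (ψ : AddChar G ℂ) :
    addFourier (fun x => f (x + a) - f x) ψ = (ψ a - 1) * addFourier f ψ := by
  have shift : ∑ x, f (x + a) * ψ (-x) = ψ a * addFourier f ψ := by
    rw [addFourier, Finset.mul_sum,
      ← Equiv.sum_comp (Equiv.addRight a) fun x => ψ a * (f x * ψ (-x))]
    refine Finset.sum_congr rfl fun x _ => ?_
    rw [Equiv.coe_addRight, mul_left_comm, ← AddChar.map_add_eq_mul, neg_add_rev,
      add_neg_cancel_left]
  simp only [addFourier, sub_mul, Finset.sum_sub_distrib, one_mul] at shift ⊢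
  rw [shift]

theorem sum_laplaceSymbol_mul_norm_sq (e : ι → G) (f : G → ℂ) :
    ∑ ψ, laplaceSymbol e ψ * ‖addFourier f ψ‖ ^ 2
      = Fintype.card G * ∑ i, ∑ x, ‖f (x + e i) - f x‖ ^ 2 := by
  simp only [laplaceSymbol, Finset.sum_mul, Finset.mul_sum]
  rw [Finset.sum_comm]
  refine Finset.sum_congr rfl fun i _ => ?_
  rw [← Finset.mul_sum, ← sum_norm_sq_addFourier]
  simp only [addFourier_shift_sub, norm_mul, mul_pow]

lemma sum_laplaceSymbol_mul_norm_sq_le (e : ι → G) {f : G → ℂ} {L : ℝ}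
    (hf : ∀ i x, ‖f (x + e i) - f x‖ ≤ L) :
    ∑ ψ, laplaceSymbol e ψ * ‖addFourier f ψ‖ ^ 2 ≤ Fintype.card G ^ 2 * (Fintype.card ι * L ^ 2) :=
  calc ∑ ψ, laplaceSymbol e ψ * ‖addFourier f ψ‖ ^ 2
      = Fintype.card G * ∑ i, ∑ x, ‖f (x + e i) - f x‖ ^ 2 := sum_laplaceSymbol_mul_norm_sq e f
    _ ≤ Fintype.card G * ∑ _i : ι, ∑ _x : G, L ^ 2 := by gcongr; exact hf _ _
    _ = Fintype.card G ^ 2 * (Fintype.card ι * L ^ 2) := by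
        simp only [Finset.sum_const, Finset.card_univ, nsmul_eq_mul]
        ring

end Plancherel

-- Pairing of `f` with a signed measure of mass zero, bounded by the `H¹` norm of `f` times the
-- `H⁻¹` norm of the measure. The trivial character contributes `0 / 0 = 0` on the right.
theorem norm_sum_sub_le_of_lipschitz [Finite G] {e : ι → G}
    (he : ∀ ψ, laplaceSymbol e ψ = 0 → ψ = 0) {f : G → ℂ} {L : ℝ} (hL : 0 ≤ L)
    (hf : ∀ i x, ‖f (x + e i) - f x‖ ≤ L) {κ : Type*} (s : Finset κ) (u v : κ → G) :
    ‖∑ k ∈ s, (f (u k) - f (v k))‖ ≤ √(Fintype.card ι) * L *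
      √(∑ ψ : AddChar G ℂ, ‖∑ k ∈ s, (ψ (u k) - ψ (v k))‖ ^ 2 / laplaceSymbol e ψ) := by
  have := Fintype.ofFinite G
  let D (ψ : AddChar G ℂ) : ℂ := ∑ k ∈ s, (ψ (u k) - ψ (v k))
  have card_pos : (0 : ℝ) < Fintype.card G := mod_cast Fintype.card_pos
  have D_zero : D 0 = 0 := by simp [D]
  have plancherel : Fintype.card G * ∑ k ∈ s, (f (u k) - f (v k)) = ∑ ψ, addFourier f ψ * D ψ := by
    simp only [D, Finset.mul_sum, mul_sub, ← sum_addFourier_mul, ← Finset.sum_sub_distrib]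
    exact Finset.sum_comm
  have split (ψ : AddChar G ℂ) : ‖addFourier f ψ * D ψ‖
      = √(laplaceSymbol e ψ * ‖addFourier f ψ‖ ^ 2) * √(‖D ψ‖ ^ 2 / laplaceSymbol e ψ) := by
    have nonneg := laplaceSymbol_nonneg e ψ
    rw [Real.sqrt_mul nonneg, Real.sqrt_div (sq_nonneg _), Real.sqrt_sq (norm_nonneg _),
      Real.sqrt_sq (norm_nonneg _), norm_mul]
    rcases nonneg.eq_or_lt with h | h
    · simp [he ψ h.symm, D_zero]
    · have := (Real.sqrt_pos.2 h).ne'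
      field_simp
  refine le_of_mul_le_mul_left ?_ card_pos
  calc Fintype.card G * ‖∑ k ∈ s, (f (u k) - f (v k))‖ = ‖∑ ψ, addFourier f ψ * D ψ‖ := by
        rw [← plancherel, norm_mul, Complex.norm_natCast]
    _ ≤ ∑ ψ, ‖addFourier f ψ * D ψ‖ := norm_sum_le _ _
    _ ≤ √(∑ ψ, laplaceSymbol e ψ * ‖addFourier f ψ‖ ^ 2) *
          √(∑ ψ, ‖D ψ‖ ^ 2 / laplaceSymbol e ψ) := by
        simp only [split]
        exact Real.sum_sqrt_mul_sqrt_le _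
          (fun ψ => mul_nonneg (laplaceSymbol_nonneg e ψ) (sq_nonneg _))
          (fun ψ => div_nonneg (sq_nonneg _) (laplaceSymbol_nonneg e ψ))
    _ ≤ √(Fintype.card G ^ 2 * (Fintype.card ι * L ^ 2)) *
          √(∑ ψ, ‖D ψ‖ ^ 2 / laplaceSymbol e ψ) := by
        gcongr
        exact sum_laplaceSymbol_mul_norm_sq_le e hf
    _ = Fintype.card G * (√(Fintype.card ι) * L * √(∑ ψ, ‖D ψ‖ ^ 2 / laplaceSymbol e ψ)) := by
        rw [Real.sqrt_mul (by positivity), Real.sqrt_sq card_pos.le,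
          Real.sqrt_mul (Nat.cast_nonneg _), Real.sqrt_sq hL]
        ring

end FiniteFourier

section Torus

lemma two_mul_abs_valMinAbs_le {M : ℕ} [NeZero M] (a : ZMod M) : 2 * |(a.valMinAbs : ℝ)| ≤ M := by
  have := ZMod.natAbs_valMinAbs_le a
  rw [← Int.cast_abs, ← Nat.cast_natAbs]
  exact_mod_cast (by omega : 2 * a.valMinAbs.natAbs ≤ M)

lemma mul_abs_valMinAbs_le_norm_stdAddChar_sub_one {M : ℕ} [NeZero M] (a : ZMod M) :
    4 / M * |(a.valMinAbs : ℝ)| ≤ ‖ZMod.stdAddChar a - 1‖ := by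
  have M_pos : (0 : ℝ) < M := mod_cast NeZero.pos M
  set θ : ℝ := π / M * a.valMinAbs with hθ
  have stdAddChar_eq : ZMod.stdAddChar a = Complex.exp (Complex.I * (2 * θ : ℝ)) := by
    conv_lhs => rw [← ZMod.coe_valMinAbs a, ZMod.stdAddChar_coe]
    rw [hθ]
    push_cast
    ring_nf
  have abs_θ : |θ| = π / M * |(a.valMinAbs : ℝ)| := by
    rw [hθ, abs_mul, abs_of_pos (by positivity)]
  have abs_θ_le : |θ| ≤ π / 2 :=
    calc |θ| = π / M / 2 * (2 * |(a.valMinAbs : ℝ)|) := by rw [abs_θ]; ring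
      _ ≤ π / M / 2 * M := by gcongr; exact two_mul_abs_valMinAbs_le a
      _ = π / 2 := by field_simp
  calc 4 / M * |(a.valMinAbs : ℝ)| = 2 * (2 / π * |θ|) := by rw [abs_θ]; field_simp; ring
    _ ≤ 2 * |sin θ| := by gcongr; exact Real.mul_abs_le_abs_sin abs_θ_le
    _ = ‖ZMod.stdAddChar a - 1‖ := by
        rw [stdAddChar_eq, Complex.norm_exp_I_mul_ofReal_sub_one, Real.norm_eq_abs, abs_mul,
          abs_two, mul_div_cancel_left₀ θ two_ne_zero]

variable {ι : Type*} [Fintype ι] {M : ℕ}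

/-- Sup norm of a frequency, each coordinate being represented in `(-M/2, M/2]`. -/
def supFreq (m : ι → ZMod M) : ℕ := Finset.univ.sup fun i => (m i).valMinAbs.natAbs

lemma natAbs_valMinAbs_le_supFreq (m : ι → ZMod M) (i : ι) :
    (m i).valMinAbs.natAbs ≤ supFreq m :=
  Finset.le_sup (f := fun i => (m i).valMinAbs.natAbs) (Finset.mem_univ i)

lemma supFreq_eq_zero_iff {m : ι → ZMod M} : supFreq m = 0 ↔ m = 0 := by
  rw [supFreq, ← Nat.bot_eq_zero, Finset.sup_eq_bot_iff, funext_iff]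
  simp

lemma exists_natAbs_valMinAbs_eq_supFreq {m : ι → ZMod M} (hm : supFreq m ≠ 0) :
    ∃ i, (m i).valMinAbs.natAbs = supFreq m := by
  obtain ⟨i₀, -⟩ := Function.ne_iff.1 (supFreq_eq_zero_iff.not.1 hm)
  obtain ⟨i, -, hi⟩ := Finset.exists_mem_eq_sup Finset.univ ⟨i₀, Finset.mem_univ i₀⟩
    fun i => (m i).valMinAbs.natAbs
  exact ⟨i, hi.symm⟩

variable [NeZero M]

/-- The character `x ↦ exp (2πi ⟨m, x⟩ / M)` of the discrete torus `(ℤ/M)^ι`. -/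
def torusChar (m : ι → ZMod M) : AddChar (ι → ZMod M) ℂ where
  toFun x := ZMod.stdAddChar (m ⬝ᵥ x)
  map_zero_eq_one' := by rw [dotProduct_zero, AddChar.map_zero_eq_one]
  map_add_eq_mul' x y := by rw [dotProduct_add, AddChar.map_add_eq_mul]

lemma torusChar_zero : torusChar (0 : ι → ZMod M) = 0 := by
  ext x
  simp [torusChar]

lemma torusChar_single [DecidableEq ι] (m : ι → ZMod M) (i : ι) :
    torusChar m (Pi.single i 1) = ZMod.stdAddChar (m i) := by
  simp [torusChar]

lemma torusChar_bijective : Function.Bijective (torusChar : (ι → ZMod M) → _) := by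
  classical
  refine (Fintype.bijective_iff_injective_and_card _).2 ⟨fun m m' h => ?_, AddChar.card_eq.symm⟩
  ext1 i
  apply ZMod.injective_stdAddChar
  simp only [← torusChar_single, h]

lemma supFreq_le (m : ι → ZMod M) : supFreq m ≤ M / 2 :=
  Finset.sup_le fun i _ => ZMod.natAbs_valMinAbs_le (m i)

lemma supFreq_sq_le_laplaceSymbol [DecidableEq ι] (m : ι → ZMod M) :
    (4 / M * supFreq m : ℝ) ^ 2 ≤ laplaceSymbol (fun i => Pi.single i 1) (torusChar m) := by
  by_cases hm : supFreq m = 0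
  · simpa [hm] using laplaceSymbol_nonneg _ _
  obtain ⟨i, hi⟩ := exists_natAbs_valMinAbs_eq_supFreq hm
  calc (4 / M * supFreq m : ℝ) ^ 2 = (4 / M * |((m i).valMinAbs : ℝ)|) ^ 2 := by
        rw [← hi, Nat.cast_natAbs, Int.cast_abs]
    _ ≤ ‖torusChar m (Pi.single i 1) - 1‖ ^ 2 := by
        rw [torusChar_single]
        gcongr
        exact mul_abs_valMinAbs_le_norm_stdAddChar_sub_one (m i)
    _ ≤ laplaceSymbol (fun i => Pi.single i 1) (torusChar m) :=
        Finset.single_le_sum (f := fun i => ‖torusChar m (Pi.single i 1) - 1‖ ^ 2)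
          (fun _ _ => sq_nonneg _) (Finset.mem_univ i)

lemma supFreq_eq_zero_of_laplaceSymbol [DecidableEq ι] {m : ι → ZMod M}
    (hm : laplaceSymbol (fun i => Pi.single i 1) (torusChar m) = 0) : supFreq m = 0 := by
  have M_ne : (M : ℝ) ≠ 0 := mod_cast NeZero.ne M
  have : (4 / M * supFreq m : ℝ) = 0 :=
    pow_eq_zero_iff two_ne_zero |>.1 <|
      le_antisymm (hm ▸ supFreq_sq_le_laplaceSymbol m) (sq_nonneg _)
  simpa [M_ne] using this

lemma eq_zero_of_laplaceSymbol_eq_zero [DecidableEq ι] {ψ : AddChar (ι → ZMod M) ℂ}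
    (hψ : laplaceSymbol (fun i => Pi.single i 1) ψ = 0) : ψ = 0 := by
  obtain ⟨m, rfl⟩ := torusChar_bijective.2 ψ
  rw [supFreq_eq_zero_iff.1 (supFreq_eq_zero_of_laplaceSymbol hψ), torusChar_zero]

theorem norm_sum_sub_le_of_lipschitz_torus [DecidableEq ι] {f : (ι → ZMod M) → ℂ} {L : ℝ}
    (hL : 0 ≤ L) (hf : ∀ i x, ‖f (x + Pi.single i 1) - f x‖ ≤ L) {κ : Type*} (s : Finset κ)
    (u v : κ → ι → ZMod M) :
    ‖∑ k ∈ s, (f (u k) - f (v k))‖ ≤ √(Fintype.card ι) * L * (M / 4) *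
      √(∑ m, ‖∑ k ∈ s, (torusChar m (u k) - torusChar m (v k))‖ ^ 2 / (supFreq m : ℝ) ^ 2) := by
  let D (m : ι → ZMod M) : ℂ := ∑ k ∈ s, (torusChar m (u k) - torusChar m (v k))
  have M_pos : (0 : ℝ) < M := mod_cast NeZero.pos M
  have term_le (m : ι → ZMod M) :
      ‖D m‖ ^ 2 / laplaceSymbol (fun i => Pi.single i 1) (torusChar m)
        ≤ (M / 4 : ℝ) ^ 2 * (‖D m‖ ^ 2 / (supFreq m : ℝ) ^ 2) := by
    by_cases hm : m = 0
    · simp [D, hm, torusChar_zero]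
    have supFreq_pos : (0 : ℝ) < supFreq m :=
      mod_cast Nat.pos_of_ne_zero (supFreq_eq_zero_iff.not.2 hm)
    calc _ ≤ ‖D m‖ ^ 2 / (4 / M * supFreq m : ℝ) ^ 2 := by
          gcongr
          exact supFreq_sq_le_laplaceSymbol m
      _ = (M / 4 : ℝ) ^ 2 * (‖D m‖ ^ 2 / (supFreq m : ℝ) ^ 2) := by field_simp
  refine (norm_sum_sub_le_of_lipschitz (fun _ => eq_zero_of_laplaceSymbol_eq_zero) hL hf s u
    v).trans ?_
  rw [mul_assoc _ (M / 4 : ℝ), ← Real.sqrt_sq (by positivity : (0 : ℝ) ≤ M / 4),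
    ← Real.sqrt_mul (sq_nonneg _), ← torusChar_bijective.sum_comp, Finset.mul_sum]
  gcongr
  exact term_le _

end Torus

section ShellCounting

variable {M : ℕ} [NeZero M]

lemma card_natAbs_valMinAbs_eq_le (r : ℕ) :
    Finset.card {a : ZMod M | a.valMinAbs.natAbs = r} ≤ 2 := by
  refine (Finset.card_le_card_of_injOn (t := {(r : ℤ), -(r : ℤ)}) ZMod.valMinAbs ?_
    ZMod.injective_valMinAbs.injOn).trans Finset.card_le_two
  intro a ha
  simpa [Int.natAbs_eq_iff] using ha

lemma card_natAbs_valMinAbs_le_le (r : ℕ) :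
    Finset.card {a : ZMod M | a.valMinAbs.natAbs ≤ r} ≤ 2 * r + 1 := by
  refine (Finset.card_le_card_of_injOn (t := Finset.Icc (-r : ℤ) r) ZMod.valMinAbs ?_
    ZMod.injective_valMinAbs.injOn).trans_eq ?_
  · intro a ha
    simp only [Finset.coe_filter, Finset.mem_univ, true_and, Set.mem_ofPred_eq] at ha
    simp only [Finset.coe_Icc, Set.mem_Icc]
    omega
  · rw [Int.card_Icc]
    omega

variable {ι : Type*} [Fintype ι] [DecidableEq ι]

-- On the sphere of radius `r` some coordinate equals `±r`, and the others have modulus at most `r`.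
lemma card_supFreq_eq_le {r : ℕ} (hr : r ≠ 0) :
    Finset.card {m : ι → ZMod M | supFreq m = r}
      ≤ Fintype.card ι * (2 * (3 * r) ^ (Fintype.card ι - 1)) := by
  let ball : Finset (ZMod M) := {a | a.valMinAbs.natAbs ≤ r}
  let sphere : Finset (ZMod M) := {a | a.valMinAbs.natAbs = r}
  let face (i : ι) : Finset (ι → ZMod M) :=
    Fintype.piFinset (Function.update (fun _ => ball) i sphere)
  have subset : ({m : ι → ZMod M | supFreq m = r} : Finset _) ⊆ Finset.univ.biUnion face := by
    intro m hm
    obtain rfl : supFreq m = r := by simpa using hm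
    obtain ⟨i, hi⟩ := exists_natAbs_valMinAbs_eq_supFreq hr
    refine Finset.mem_biUnion.2 ⟨i, Finset.mem_univ i, Fintype.mem_piFinset.2 fun j => ?_⟩
    rcases eq_or_ne j i with rfl | hj
    · simpa [sphere] using hi
    · simpa [ball, hj] using natAbs_valMinAbs_le_supFreq m j
  have card_face (i : ι) : (face i).card ≤ 2 * (3 * r) ^ (Fintype.card ι - 1) := by
    rw [Fintype.card_piFinset, ← Finset.mul_prod_erase _ _ (Finset.mem_univ i),
      Function.update_self]
    refine Nat.mul_le_mul (card_natAbs_valMinAbs_eq_le r) ?_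
    rw [← Finset.card_univ, ← Finset.card_erase_of_mem (Finset.mem_univ i)]
    refine Finset.prod_le_pow_card _ _ _ fun j hj => ?_
    rw [Function.update_of_ne (Finset.ne_of_mem_erase hj)]
    exact (card_natAbs_valMinAbs_le_le r).trans (by omega)
  calc _ ≤ (Finset.univ.biUnion face).card := Finset.card_le_card subset
    _ ≤ Fintype.card ι * (2 * (3 * r) ^ (Fintype.card ι - 1)) :=
        Finset.card_biUnion_le_card_mul _ _ _ fun i _ => card_face i

/-- `∑_{r=1}^N r^(d-3)`, which up to a constant is the sum of `‖m‖⁻²` over the nonzero frequencies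
`m ∈ ℤ^d` with `‖m‖ ≤ N`. -/
def shellSum (d N : ℕ) : ℝ := ∑ r ∈ Finset.Icc 1 N, (r : ℝ) ^ (d - 1) / (r : ℝ) ^ 2

theorem sum_inv_supFreq_sq_le :
    ∑ m : ι → ZMod M, ((supFreq m : ℝ) ^ 2)⁻¹
      ≤ Fintype.card ι * (2 * 3 ^ (Fintype.card ι - 1)) * shellSum (Fintype.card ι) (M / 2) := by
  have outside (r : ℕ) (hr : r ∉ Finset.Icc 1 (M / 2)) :
      ∑ m : ι → ZMod M with supFreq m = r, ((supFreq m : ℝ) ^ 2)⁻¹ ≤ 0 := by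
    refine Finset.sum_nonpos fun m hm => ?_
    have m_eq : supFreq m = r := by simpa using hm
    have r_eq : r = 0 := by
      have := m_eq ▸ supFreq_le m
      simp only [Finset.mem_Icc] at hr
      omega
    simp [m_eq, r_eq]
  rw [shellSum, Finset.mul_sum]
  refine (Finset.sum_le_sum_fiberwise_of_sum_fiber_nonpos outside).trans
    (Finset.sum_le_sum fun r hr => ?_)
  have card_le : (Finset.card {m : ι → ZMod M | supFreq m = r} : ℝ)
      ≤ Fintype.card ι * (2 * (3 * r) ^ (Fintype.card ι - 1)) :=
    mod_cast card_supFreq_eq_le (by have := (Finset.mem_Icc.1 hr).1; omega)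
  calc ∑ m : ι → ZMod M with supFreq m = r, ((supFreq m : ℝ) ^ 2)⁻¹
      = Finset.card {m : ι → ZMod M | supFreq m = r} * ((r : ℝ) ^ 2)⁻¹ := by
        rw [← nsmul_eq_mul, ← Finset.sum_const]
        exact Finset.sum_congr rfl fun m hm => by rw [(Finset.mem_filter.1 hm).2]
    _ ≤ Fintype.card ι * (2 * (3 * r) ^ (Fintype.card ι - 1)) * ((r : ℝ) ^ 2)⁻¹ := by gcongr
    _ = Fintype.card ι * (2 * 3 ^ (Fintype.card ι - 1)) *
          ((r : ℝ) ^ (Fintype.card ι - 1) / (r : ℝ) ^ 2) := by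
        rw [mul_pow]
        ring

end ShellCounting

section Grid

variable {M : ℕ} [NeZero M]

lemma natAbs_valMinAbs_le_of_intCast_eq {a : ZMod M} {k : ℤ} (hk : (k : ZMod M) = a) :
    a.valMinAbs.natAbs ≤ k.natAbs :=
  ZMod.natAbs_min_of_le_div_two M _ _ (by rw [ZMod.coe_valMinAbs, hk]) (ZMod.natAbs_valMinAbs_le a)

lemma abs_natAbs_valMinAbs_add_one_sub_le (a : ZMod M) :
    |((a + 1).valMinAbs.natAbs : ℝ) - a.valMinAbs.natAbs| ≤ 1 := by
  have up : (a + 1).valMinAbs.natAbs ≤ (a.valMinAbs + 1).natAbs :=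
    natAbs_valMinAbs_le_of_intCast_eq (by simp)
  have down : a.valMinAbs.natAbs ≤ ((a + 1).valMinAbs - 1).natAbs :=
    natAbs_valMinAbs_le_of_intCast_eq (by simp)
  have up' : ((a + 1).valMinAbs.natAbs : ℝ) ≤ a.valMinAbs.natAbs + 1 := mod_cast by omega
  have down' : (a.valMinAbs.natAbs : ℝ) ≤ (a + 1).valMinAbs.natAbs + 1 := mod_cast by omega
  exact abs_le.2 ⟨by linarith, by linarith⟩

variable {ι : Type*}

/-- Rounds the points of `[0,1]^ι` to the grid of mesh `1/N`, seen as the part with coordinates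
`0, …, N` of the torus `(ℤ/2N)^ι`. -/
def gridRound (N : ℕ) (x : ι → ℝ) : ι → ZMod (2 * N) := fun i => (⌊N * x i⌋₊ : ℕ)

/-- Folds the torus `(ℤ/2N)^ι` onto the grid of mesh `1/N` in `[0,1]^ι` by reflection. -/
def torusFold (N : ℕ) (a : ι → ZMod (2 * N)) : ι → ℝ := fun i => (a i).valMinAbs.natAbs / N

lemma measurable_gridRound (N : ℕ) : Measurable (gridRound N : (ι → ℝ) → ι → ZMod (2 * N)) :=
  measurable_pi_lambda _ fun i =>
    (Measurable.of_discrete (f := fun k : ℕ => (k : ZMod (2 * N)))).comp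
      (Nat.measurable_floor.comp ((measurable_pi_apply i).const_mul _))

variable {N : ℕ} [NeZero N]

lemma abs_sub_torusFold_gridRound_le {x : ι → ℝ} {i : ι} (hx : x i ∈ Set.Icc (0 : ℝ) 1) :
    |x i - torusFold N (gridRound N x) i| ≤ (N : ℝ)⁻¹ := by
  have N_pos : (0 : ℝ) < N := mod_cast NeZero.pos N
  have floor_le : ⌊N * x i⌋₊ ≤ N := Nat.floor_le_of_le (mul_le_of_le_one_right N_pos.le hx.2)
  have fold_eq : torusFold N (gridRound N x) i = ⌊N * x i⌋₊ / N := by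
    rw [torusFold, gridRound, ZMod.valMinAbs_natCast_of_le_half (by omega), Int.natAbs_natCast]
  have sub_eq : x i - ⌊N * x i⌋₊ / N = (N : ℝ)⁻¹ * (N * x i - ⌊N * x i⌋₊) := by field_simp
  have lower := Nat.floor_le (mul_nonneg N_pos.le hx.1)
  have upper := Nat.lt_floor_add_one (N * x i)
  rw [fold_eq, sub_eq, abs_mul, abs_of_pos (inv_pos.2 N_pos)]
  exact mul_le_of_le_one_right (inv_pos.2 N_pos).le (abs_le.2 ⟨by linarith, by linarith⟩)

variable {d : ℕ}

lemma euclidDist_torusFold_gridRound_le {x : Fin d → ℝ} (hx : ∀ i, x i ∈ Set.Icc (0 : ℝ) 1) :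
    euclidDist x (torusFold N (gridRound N x)) ≤ √d * (N : ℝ)⁻¹ :=
  euclidDist_le_sqrt_mul (by positivity) fun i => abs_sub_torusFold_gridRound_le (hx i)

lemma euclidDist_torusFold_add_single_le (a : Fin d → ZMod (2 * N)) (i : Fin d) :
    euclidDist (torusFold N (a + Pi.single i 1)) (torusFold N a) ≤ (N : ℝ)⁻¹ := by
  have off_axis : ∀ j ≠ i, (torusFold N (a + Pi.single i 1) j - torusFold N a j) ^ 2 = 0 := by
    intro j hj
    simp [torusFold, hj]
  rw [euclidDist, Fintype.sum_eq_single i off_axis, Real.sqrt_sq_eq_abs, torusFold, torusFold,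
    Pi.add_apply, Pi.single_eq_same, ← sub_div, abs_div, Nat.abs_cast, ← one_div]
  gcongr
  exact abs_natAbs_valMinAbs_add_one_sub_le (a i)

/-- Difference at `z = (x, y)` of the character of frequency `m` evaluated at the grid points near
`x` and `y`; its sums over a sample are the Fourier coefficients of the signed empirical measure. -/
def gridCharDiff (m : Fin d → ZMod (2 * N)) (z : (Fin d → ℝ) × (Fin d → ℝ)) : ℂ :=
  torusChar m (gridRound N z.1) - torusChar m (gridRound N z.2)

lemma measurable_torusChar_gridRound (m : Fin d → ZMod (2 * N)) :
    Measurable fun x : Fin d → ℝ => torusChar m (gridRound N x) :=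
  (Measurable.of_discrete (f := torusChar m)).comp (measurable_gridRound N)

lemma measurable_gridCharDiff (m : Fin d → ZMod (2 * N)) : Measurable (gridCharDiff m) :=
  ((measurable_torusChar_gridRound m).comp measurable_fst).sub
    ((measurable_torusChar_gridRound m).comp measurable_snd)

lemma norm_gridCharDiff_le (m : Fin d → ZMod (2 * N)) (z : (Fin d → ℝ) × (Fin d → ℝ)) :
    ‖gridCharDiff m z‖ ≤ 2 := by
  refine (norm_sub_le _ _).trans_eq ?_
  rw [AddChar.norm_apply, AddChar.norm_apply, one_add_one_eq_two]

lemma sum_sub_comp_torusFold_le {F : (Fin d → ℝ) → ℝ} (hF : ∀ a b, F a - F b ≤ euclidDist a b)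
    {κ : Type*} (s : Finset κ) (x y : κ → Fin d → ℝ) :
    ∑ k ∈ s, (F (torusFold N (gridRound N (x k))) - F (torusFold N (gridRound N (y k))))
      ≤ √d / 2 * √(∑ m : Fin d → ZMod (2 * N),
          ‖∑ k ∈ s, gridCharDiff m (x k, y k)‖ ^ 2 / (supFreq m : ℝ) ^ 2) := by
  have N_pos : (0 : ℝ) < N := mod_cast NeZero.pos N
  have lipschitz (i : Fin d) (a : Fin d → ZMod (2 * N)) :
      ‖(F (torusFold N (a + Pi.single i 1)) : ℂ) - F (torusFold N a)‖ ≤ (N : ℝ)⁻¹ := by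
    have forward := hF (torusFold N (a + Pi.single i 1)) (torusFold N a)
    have backward := hF (torusFold N a) (torusFold N (a + Pi.single i 1))
    have step := euclidDist_torusFold_add_single_le a i
    rw [euclidDist_comm] at backward
    rw [← Complex.ofReal_sub, Complex.norm_real, Real.norm_eq_abs, abs_le]
    constructor <;> linarith
  have fourier := norm_sum_sub_le_of_lipschitz_torus
    (f := fun a : Fin d → ZMod (2 * N) => (F (torusFold N a) : ℂ)) (by positivity) lipschitz s
    (fun k => gridRound N (x k)) (fun k => gridRound N (y k))
  have constant : √d * (N : ℝ)⁻¹ * ((2 * N : ℕ) / 4) = √d / 2 := by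
    push_cast
    field_simp
    norm_num
  rw [Fintype.card_fin, constant] at fourier
  refine le_trans (le_trans (le_abs_self _) (le_of_eq ?_)) fourier
  rw [← Real.norm_eq_abs, ← Complex.norm_real]
  push_cast
  rfl

theorem W1_empMeasure_le {Ω : Type*} [MeasurableSpace Ω] {X Y : ℕ → Ω → Fin d → ℝ} {ω : Ω}
    (hX : ∀ k i, X k ω i ∈ Set.Icc (0 : ℝ) 1) (hY : ∀ k i, Y k ω i ∈ Set.Icc (0 : ℝ) 1)
    {n : ℕ} (hn : n ≠ 0) :
    W1 (empMeasure X n ω) (empMeasure Y n ω) ≤ ENNReal.ofReal (2 * (√d * (N : ℝ)⁻¹) +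
      (n : ℝ)⁻¹ * (√d / 2 * √(∑ m : Fin d → ZMod (2 * N),
        ‖∑ k ∈ Finset.range n, gridCharDiff m (X k ω, Y k ω)‖ ^ 2 / (supFreq m : ℝ) ^ 2))) := by
  have n_pos : (0 : ℝ) < n := mod_cast Nat.pos_of_ne_zero hn
  refine W1_empMeasure_le_of_lipschitz X Y hn ω fun F hF => ?_
  let rounded (x : Fin d → ℝ) : Fin d → ℝ := torusFold N (gridRound N x)
  have rounding (k : ℕ) : F (X k ω) - F (Y k ω)
      ≤ 2 * (√d * (N : ℝ)⁻¹) + (F (rounded (X k ω)) - F (rounded (Y k ω))) := by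
    have hXk := (hF (X k ω) (rounded (X k ω))).trans (euclidDist_torusFold_gridRound_le (hX k))
    have hYk := hF (rounded (Y k ω)) (Y k ω)
    rw [euclidDist_comm] at hYk
    linarith [hYk.trans (euclidDist_torusFold_gridRound_le (hY k))]
  calc (n : ℝ)⁻¹ * ∑ k ∈ Finset.range n, (F (X k ω) - F (Y k ω))
      ≤ (n : ℝ)⁻¹ * ∑ k ∈ Finset.range n,
          (2 * (√d * (N : ℝ)⁻¹) + (F (rounded (X k ω)) - F (rounded (Y k ω)))) := by
        gcongr with k
        exact rounding k
    _ = 2 * (√d * (N : ℝ)⁻¹) +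
          (n : ℝ)⁻¹ * ∑ k ∈ Finset.range n, (F (rounded (X k ω)) - F (rounded (Y k ω))) := by
        rw [Finset.sum_add_distrib, Finset.sum_const, Finset.card_range, nsmul_eq_mul, mul_add,
          inv_mul_cancel_left₀ n_pos.ne']
    _ ≤ _ := by
        gcongr
        exact sum_sub_comp_torusFold_le hF _ _ _

end Grid

section Covariance

variable {Ω : Type*} {m m₀ : MeasurableSpace Ω} {P : Measure Ω} {K : ℝ}

lemma integral_abs_le_of_abs_setIntegral_le {g : Ω → ℝ} (hm : m ≤ m₀) (hg : StronglyMeasurable[m] g)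
    (g_int : Integrable g P) (hK : ∀ A, MeasurableSet[m] A → |∫ ω in A, g ω ∂P| ≤ K) :
    ∫ ω, |g ω| ∂P ≤ 2 * K := by
  have pos_set : MeasurableSet[m] {ω | 0 ≤ g ω} :=
    stronglyMeasurable_const.measurableSet_le hg
  have abs_pos : ∫ ω in {ω | 0 ≤ g ω}, |g ω| ∂P = ∫ ω in {ω | 0 ≤ g ω}, g ω ∂P :=
    setIntegral_congr_fun (hm _ pos_set) fun ω hω => abs_of_nonneg hω
  have abs_neg : ∫ ω in {ω | 0 ≤ g ω}ᶜ, |g ω| ∂P = -∫ ω in {ω | 0 ≤ g ω}ᶜ, g ω ∂P := by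
    rw [← integral_neg]
    exact setIntegral_congr_fun (hm _ pos_set.compl) fun ω hω => abs_of_neg (not_le.1 hω)
  rw [← integral_add_compl (hm _ pos_set) g_int.abs, abs_pos, abs_neg]
  linarith [le_of_abs_le (hK _ pos_set), neg_le_of_abs_le (hK _ pos_set.compl)]

lemma integral_norm_le_of_norm_setIntegral_le {g : Ω → ℂ} (hm : m ≤ m₀)
    (hg : StronglyMeasurable[m] g) (g_int : Integrable g P)
    (hK : ∀ A, MeasurableSet[m] A → ‖∫ ω in A, g ω ∂P‖ ≤ K) : ∫ ω, ‖g ω‖ ∂P ≤ 4 * K := by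
  have re_le : ∫ ω, |(g ω).re| ∂P ≤ 2 * K :=
    integral_abs_le_of_abs_setIntegral_le hm (Complex.continuous_re.comp_stronglyMeasurable hg)
      g_int.re fun A hA => by
        have re_eq : ∫ ω in A, (g ω).re ∂P = (∫ ω in A, g ω ∂P).re :=
          integral_re g_int.integrableOn
        exact re_eq ▸ (Complex.abs_re_le_norm _).trans (hK A hA)
  have im_le : ∫ ω, |(g ω).im| ∂P ≤ 2 * K :=
    integral_abs_le_of_abs_setIntegral_le hm (Complex.continuous_im.comp_stronglyMeasurable hg)
      g_int.im fun A hA => by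
        have im_eq : ∫ ω in A, (g ω).im ∂P = (∫ ω in A, g ω ∂P).im :=
          integral_im g_int.integrableOn
        exact im_eq ▸ (Complex.abs_im_le_norm _).trans (hK A hA)
  calc ∫ ω, ‖g ω‖ ∂P ≤ ∫ ω, (|(g ω).re| + |(g ω).im|) ∂P :=
        integral_mono g_int.norm (g_int.re.abs.add g_int.im.abs)
          fun ω => Complex.norm_le_abs_re_add_abs_im (g ω)
    _ = ∫ ω, |(g ω).re| ∂P + ∫ ω, |(g ω).im| ∂P := integral_add g_int.re.abs g_int.im.abs
    _ ≤ 4 * K := by linarith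

lemma integral_norm_sum_sq_le {κ : Type*} (s : Finset κ) {ξ : κ → Ω → ℂ}
    (hξ : ∀ j k, Integrable (fun ω => ξ j ω * starRingEnd ℂ (ξ k ω)) P) :
    ∫ ω, ‖∑ k ∈ s, ξ k ω‖ ^ 2 ∂P
      ≤ ∑ j ∈ s, ∑ k ∈ s, ‖∫ ω, ξ j ω * starRingEnd ℂ (ξ k ω) ∂P‖ := by
  have expand : ((∫ ω, ‖∑ k ∈ s, ξ k ω‖ ^ 2 ∂P : ℝ) : ℂ)
      = ∑ j ∈ s, ∑ k ∈ s, ∫ ω, ξ j ω * starRingEnd ℂ (ξ k ω) ∂P := by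
    have pointwise (ω : Ω) : ((‖∑ k ∈ s, ξ k ω‖ ^ 2 : ℝ) : ℂ)
        = ∑ j ∈ s, ∑ k ∈ s, ξ j ω * starRingEnd ℂ (ξ k ω) := by
      rw [Complex.ofReal_pow, ← Complex.mul_conj', map_sum, Finset.sum_mul_sum]
    rw [← integral_complex_ofReal, integral_congr_ae (ae_of_all _ pointwise),
      integral_finsetSum s fun _ _ => integrable_finsetSum s fun _ _ => hξ _ _]
    exact Finset.sum_congr rfl fun j _ => integral_finsetSum s fun k _ => hξ j k
  calc ∫ ω, ‖∑ k ∈ s, ξ k ω‖ ^ 2 ∂P ≤ ‖((∫ ω, ‖∑ k ∈ s, ξ k ω‖ ^ 2 ∂P : ℝ) : ℂ)‖ := by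
        rw [Complex.norm_real]
        exact le_abs_self _
    _ ≤ ∑ j ∈ s, ∑ k ∈ s, ‖∫ ω, ξ j ω * starRingEnd ℂ (ξ k ω) ∂P‖ := by
        rw [expand]
        exact (norm_sum_le _ _).trans (Finset.sum_le_sum fun j _ => norm_sum_le _ _)

variable [IsProbabilityMeasure P]

lemma norm_integral_mul_le_of_norm_setIntegral_le {f h : Ω → ℂ} {B : ℝ} (hm : m ≤ m₀)
    (hf : StronglyMeasurable[m] f) (f_le : ∀ ω, ‖f ω‖ ≤ B) (h_int : Integrable h P)
    (hK : ∀ A, MeasurableSet[m] A → ‖∫ ω in A, h ω ∂P‖ ≤ K) :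
    ‖∫ ω, f ω * h ω ∂P‖ ≤ 4 * B * K := by
  have fh_int : Integrable (fun ω => f ω * h ω) P :=
    h_int.bdd_mul (hf.mono hm).aestronglyMeasurable (ae_of_all _ f_le)
  have pull_out : P[fun ω => f ω * h ω | m] =ᵐ[P] fun ω => f ω * P[h | m] ω :=
    condExp_bilin_of_stronglyMeasurable_left (.mul ℝ ℂ) hf fh_int h_int
  obtain ⟨ω₀⟩ := P.nonempty_of_neZero
  have B_nonneg : 0 ≤ B := (norm_nonneg _).trans (f_le ω₀)
  calc ‖∫ ω, f ω * h ω ∂P‖ = ‖∫ ω, f ω * P[h | m] ω ∂P‖ := by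
        rw [← integral_condExp hm, integral_congr_ae pull_out]
    _ ≤ ∫ ω, B * ‖P[h | m] ω‖ ∂P := by
        refine norm_integral_le_of_norm_le (integrable_condExp.norm.const_mul B)
          (ae_of_all _ fun ω => ?_)
        rw [norm_mul]
        gcongr
        exact f_le ω
    _ ≤ B * (4 * K) := by
        rw [integral_const_mul]
        gcongr
        refine integral_norm_le_of_norm_setIntegral_le hm stronglyMeasurable_condExp
          integrable_condExp fun A hA => ?_
        rw [setIntegral_condExp hm h_int hA]
        exact hK A hA
    _ = 4 * B * K := by ring

lemma setIntegral_sub_integral {A : Set Ω} (hA : MeasurableSet A) {g : Ω → ℂ}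
    (g_int : Integrable g P) :
    ∫ ω in A, (g ω - ∫ ω', g ω' ∂P) ∂P = ∫ ω, g ω * (A.indicator 1 ω - P.real A) ∂P := by
  have restricted : ∫ ω, g ω * A.indicator 1 ω ∂P = ∫ ω in A, g ω ∂P := by
    rw [← integral_indicator hA]
    exact integral_congr_ae (ae_of_all _ fun ω => by by_cases hω : ω ∈ A <;> simp [hω])
  have restricted_int : Integrable (fun ω => g ω * A.indicator 1 ω) P :=
    (g_int.indicator hA).congr (ae_of_all _ fun ω => by by_cases hω : ω ∈ A <;> simp [hω])
  simp only [mul_sub]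
  rw [integral_sub g_int.integrableOn (integrable_const _),
    integral_sub restricted_int (g_int.mul_const _), integral_mul_const, restricted,
    setIntegral_const, Complex.real_smul, mul_comm]

lemma norm_setIntegral_indicator_sub {A A' : Set Ω} (hA : MeasurableSet A) :
    ‖∫ ω in A', (A.indicator (1 : Ω → ℂ) ω - P.real A) ∂P‖
      = |P.real (A ∩ A') - P.real A * P.real A'| := by
  have indicator_int : Integrable (A.indicator (1 : Ω → ℂ)) (P.restrict A') :=
    (integrable_const (1 : ℂ)).indicator hA
  have indicator_eq : ∫ ω in A', A.indicator (1 : Ω → ℂ) ω ∂P = P.real (A ∩ A') := by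
    rw [integral_indicator hA, Measure.restrict_restrict hA]
    simp
  rw [integral_sub indicator_int (integrable_const _), indicator_eq, setIntegral_const,
    Complex.real_smul, ← Complex.ofReal_mul, ← Complex.ofReal_sub, Complex.norm_real,
    Real.norm_eq_abs, mul_comm (P.real A')]

end Covariance

section Mixing

variable {Ω : Type*} {m₁ m₂ m₀ : MeasurableSpace Ω} {P : Measure Ω}
  {E : Type*} [MeasurableSpace E]

variable (P) in
lemma mixingSeq_nonneg (Z : ℕ → Ω → E) (ℓ : ℕ) : 0 ≤ mixingSeq P Z ℓ := by
  refine Real.sSup_nonneg ?_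
  rintro _ ⟨j, k, -, rfl⟩
  refine Real.sSup_nonneg ?_
  rintro _ ⟨A, B, -, -, rfl⟩
  exact abs_nonneg _

variable [IsProbabilityMeasure P]

lemma abs_real_inter_sub_mul_le_one (A B : Set Ω) :
    |P.real (A ∩ B) - P.real A * P.real B| ≤ 1 :=
  abs_sub_le_of_nonneg_of_le measureReal_nonneg measureReal_le_one (by positivity)
    (mul_le_one₀ measureReal_le_one measureReal_nonneg measureReal_le_one)

lemma rosenblattAlpha_le_one : rosenblattAlpha P m₁ m₂ ≤ 1 := by
  refine Real.sSup_le ?_ zero_le_one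
  rintro _ ⟨A, B, -, -, rfl⟩
  exact abs_real_inter_sub_mul_le_one A B

lemma le_rosenblattAlpha {A B : Set Ω} (hA : MeasurableSet[m₁] A)
    (hB : MeasurableSet[m₂] B) :
    |P.real (A ∩ B) - P.real A * P.real B| ≤ rosenblattAlpha P m₁ m₂ := by
  refine le_csSup ⟨1, ?_⟩ ⟨A, B, hA, hB, rfl⟩
  rintro _ ⟨A, B, -, -, rfl⟩
  exact abs_real_inter_sub_mul_le_one A B

theorem norm_covariance_le_rosenblattAlpha (hm₁ : m₁ ≤ m₀) (hm₂ : m₂ ≤ m₀) {f g : Ω → ℂ} {B B' : ℝ}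
    (hf : StronglyMeasurable[m₁] f) (hg : StronglyMeasurable[m₂] g)
    (f_le : ∀ ω, ‖f ω‖ ≤ B) (g_le : ∀ ω, ‖g ω‖ ≤ B') :
    ‖∫ ω, f ω * g ω ∂P - (∫ ω, f ω ∂P) * ∫ ω, g ω ∂P‖
      ≤ 16 * B * B' * rosenblattAlpha P m₁ m₂ := by
  have f_int : Integrable f P := .of_bound (hf.mono hm₁).aestronglyMeasurable B (ae_of_all _ f_le)
  have g_int : Integrable g P := .of_bound (hg.mono hm₂).aestronglyMeasurable B' (ae_of_all _ g_le)
  have fg_int : Integrable (fun ω => f ω * g ω) P :=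
    g_int.bdd_mul (hf.mono hm₁).aestronglyMeasurable (ae_of_all _ f_le)
  have centred_indicator (A : Set Ω) (hA : MeasurableSet[m₁] A) :
      ‖∫ ω in A, (g ω - ∫ ω', g ω' ∂P) ∂P‖ ≤ 4 * B' * rosenblattAlpha P m₁ m₂ := by
    rw [setIntegral_sub_integral (hm₁ _ hA) g_int]
    refine norm_integral_mul_le_of_norm_setIntegral_le hm₂ hg g_le
      (((integrable_const (1 : ℂ)).indicator (hm₁ _ hA)).sub (integrable_const _)) fun A' hA' => ?_
    exact (norm_setIntegral_indicator_sub (hm₁ _ hA)).trans_le (le_rosenblattAlpha hA hA')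
  have expand : ∫ ω, f ω * g ω ∂P - (∫ ω, f ω ∂P) * ∫ ω, g ω ∂P
      = ∫ ω, f ω * (g ω - ∫ ω', g ω' ∂P) ∂P := by
    simp only [mul_sub]
    rw [integral_sub fg_int (f_int.mul_const _), integral_mul_const]
  rw [expand]
  refine (norm_integral_mul_le_of_norm_setIntegral_le hm₁ hf f_le
    (g_int.sub (integrable_const _)) centred_indicator).trans_eq ?_
  ring

lemma rosenblattAlpha_le_mixingSeq {Z : ℕ → Ω → E} {j k ℓ : ℕ} (hℓ : ℓ ≤ Nat.dist j k) :
    rosenblattAlpha P (MeasurableSpace.comap (Z j) inferInstance)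
      (MeasurableSpace.comap (Z k) inferInstance) ≤ mixingSeq P Z ℓ := by
  refine le_csSup ⟨1, ?_⟩ ⟨j, k, hℓ, rfl⟩
  rintro _ ⟨j, k, -, rfl⟩
  exact rosenblattAlpha_le_one

lemma sum_erase_dist_le {b : ℕ → ℝ} (hb : ∀ ℓ, 0 ≤ b ℓ) (hs : Summable fun ℓ => b (ℓ + 1))
    (n j : ℕ) :
    ∑ k ∈ (Finset.range n).erase j, b (Nat.dist j k) ≤ 2 * ∑' ℓ, b (ℓ + 1) := by
  have partial_le (t : ℕ) : ∑ ℓ ∈ Finset.range t, b (ℓ + 1) ≤ ∑' ℓ, b (ℓ + 1) :=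
    hs.sum_le_tsum _ fun ℓ _ => hb _
  have before : ∑ k ∈ Finset.range j, b (Nat.dist j k) = ∑ ℓ ∈ Finset.range j, b (ℓ + 1) := by
    rw [← Finset.sum_range_reflect]
    refine Finset.sum_congr rfl fun k hk => ?_
    have := Finset.mem_range.1 hk
    congr 1
    unfold Nat.dist
    omega
  have after : ∑ k ∈ Finset.Ico (j + 1) n, b (Nat.dist j k)
      = ∑ ℓ ∈ Finset.range (n - (j + 1)), b (ℓ + 1) := by
    rw [Finset.sum_Ico_eq_sum_range]
    refine Finset.sum_congr rfl fun ℓ _ => ?_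
    congr 1
    unfold Nat.dist
    omega
  have disjoint : Disjoint (Finset.range j) (Finset.Ico (j + 1) n) :=
    Finset.disjoint_left.2 fun k hk hk' => by
      simp only [Finset.mem_range, Finset.mem_Ico] at hk hk'
      omega
  calc ∑ k ∈ (Finset.range n).erase j, b (Nat.dist j k)
      ≤ ∑ k ∈ Finset.range j ∪ Finset.Ico (j + 1) n, b (Nat.dist j k) := by
        refine Finset.sum_le_sum_of_subset_of_nonneg (fun k hk => ?_) fun k _ _ => hb _
        simp only [Finset.mem_erase, Finset.mem_range, Finset.mem_union, Finset.mem_Ico] at hk ⊢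
        omega
    _ ≤ 2 * ∑' ℓ, b (ℓ + 1) := by
        rw [Finset.sum_union disjoint, before, after]
        linarith [partial_le j, partial_le (n - (j + 1))]

variable {Z : ℕ → Ω → E} {φ : E → ℂ} {B : ℝ}

lemma norm_integral_mul_conj_le_mixingSeq (hZ : ∀ k, Measurable (Z k)) (hφ : Measurable φ)
    (φ_le : ∀ z, ‖φ z‖ ≤ B) (φ_mean : ∀ k, ∫ ω, φ (Z k ω) ∂P = 0) (j k : ℕ) :
    ‖∫ ω, φ (Z j ω) * starRingEnd ℂ (φ (Z k ω)) ∂P‖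
      ≤ 16 * B ^ 2 * mixingSeq P Z (Nat.dist j k) := by
  have B_nonneg : 0 ≤ B := by
    obtain ⟨ω₀⟩ := P.nonempty_of_neZero
    exact (norm_nonneg _).trans (φ_le (Z j ω₀))
  have φZ_meas (k : ℕ) : Measurable[.comap (Z k) inferInstance] fun ω => φ (Z k ω) :=
    hφ.comp (comap_measurable (Z k))
  have covariance := norm_covariance_le_rosenblattAlpha (P := P) (hZ j).comap_le (hZ k).comap_le
    (φZ_meas j).stronglyMeasurable
    (Complex.continuous_conj.comp_stronglyMeasurable (φZ_meas k).stronglyMeasurable)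
    (fun ω => φ_le (Z j ω)) (fun ω => (RCLike.norm_conj _).trans_le (φ_le (Z k ω)))
  rw [φ_mean j, zero_mul, sub_zero] at covariance
  calc _ ≤ _ := covariance
    _ ≤ 16 * B * B * mixingSeq P Z (Nat.dist j k) := by
        gcongr
        exact rosenblattAlpha_le_mixingSeq le_rfl
    _ = 16 * B ^ 2 * mixingSeq P Z (Nat.dist j k) := by ring

theorem integral_norm_sum_sq_le_mixingSeq (hZ : ∀ k, Measurable (Z k)) (hφ : Measurable φ)
    (φ_le : ∀ z, ‖φ z‖ ≤ B) (φ_mean : ∀ k, ∫ ω, φ (Z k ω) ∂P = 0)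
    (hs : Summable fun ℓ => mixingSeq P Z (ℓ + 1)) (n : ℕ) :
    ∫ ω, ‖∑ k ∈ Finset.range n, φ (Z k ω)‖ ^ 2 ∂P
      ≤ n * (B ^ 2 * (1 + 32 * ∑' ℓ, mixingSeq P Z (ℓ + 1))) := by
  let cov (j k : ℕ) : ℝ := ‖∫ ω, φ (Z j ω) * starRingEnd ℂ (φ (Z k ω)) ∂P‖
  have product_le (j k : ℕ) (ω : Ω) : ‖φ (Z j ω) * starRingEnd ℂ (φ (Z k ω))‖ ≤ B ^ 2 := by
    rw [norm_mul, RCLike.norm_conj, sq]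
    exact mul_le_mul (φ_le _) (φ_le _) (norm_nonneg _) ((norm_nonneg _).trans (φ_le (Z j ω)))
  have product_int (j k : ℕ) : Integrable (fun ω => φ (Z j ω) * starRingEnd ℂ (φ (Z k ω))) P :=
    .of_bound ((hφ.comp (hZ j)).mul
      (Complex.continuous_conj.measurable.comp (hφ.comp (hZ k)))).aestronglyMeasurable
      (B ^ 2) (ae_of_all _ (product_le j k))
  have diagonal (j : ℕ) : cov j j ≤ B ^ 2 := by
    simpa using norm_integral_le_of_norm_le_const (ae_of_all P (product_le j j))
  have off_diagonal (j : ℕ) : ∑ k ∈ (Finset.range n).erase j, cov j k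
      ≤ 16 * B ^ 2 * (2 * ∑' ℓ, mixingSeq P Z (ℓ + 1)) :=
    calc _ ≤ ∑ k ∈ (Finset.range n).erase j, 16 * B ^ 2 * mixingSeq P Z (Nat.dist j k) :=
          Finset.sum_le_sum fun k _ => norm_integral_mul_conj_le_mixingSeq hZ hφ φ_le φ_mean j k
      _ ≤ _ := by
          rw [← Finset.mul_sum]
          gcongr
          exact sum_erase_dist_le (mixingSeq_nonneg P Z) hs n j
  calc _ ≤ ∑ j ∈ Finset.range n, ∑ k ∈ Finset.range n, cov j k :=
        integral_norm_sum_sq_le _ product_int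
    _ ≤ ∑ _j ∈ Finset.range n, B ^ 2 * (1 + 32 * ∑' ℓ, mixingSeq P Z (ℓ + 1)) := by
        refine Finset.sum_le_sum fun j hj => ?_
        rw [← Finset.add_sum_erase _ _ hj]
        linarith [diagonal j, off_diagonal j]
    _ = _ := by rw [Finset.sum_const, Finset.card_range, nsmul_eq_mul]

end Mixing

section Mean

variable {Ω : Type*} [MeasurableSpace Ω] {P : Measure Ω} [IsProbabilityMeasure P]

lemma integrable_sqrt {S : Ω → ℝ} (S_nonneg : ∀ ω, 0 ≤ S ω) (S_int : Integrable S P) :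
    Integrable (fun ω => √(S ω)) P := by
  refine ((integrable_const 1).add S_int).mono'
    (Real.continuous_sqrt.comp_aestronglyMeasurable S_int.1) (ae_of_all _ fun ω => ?_)
  rw [Real.norm_of_nonneg (Real.sqrt_nonneg _)]
  refine Real.sqrt_le_iff.2 ⟨add_nonneg zero_le_one (S_nonneg ω), ?_⟩
  simp only [Pi.add_apply]
  nlinarith [S_nonneg ω]

lemma integral_sqrt_le_sqrt_integral {S : Ω → ℝ} (S_nonneg : ∀ ω, 0 ≤ S ω)
    (S_int : Integrable S P) : ∫ ω, √(S ω) ∂P ≤ √(∫ ω, S ω ∂P) :=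
  Real.strictConcaveOn_sqrt.concaveOn.le_map_integral Real.continuous_sqrt.continuousOn isClosed_Ici
    (ae_of_all _ S_nonneg) S_int (integrable_sqrt S_nonneg S_int)

variable {d N : ℕ} [NeZero N]

lemma integral_gridCharDiff_eq_zero (m : Fin d → ZMod (2 * N)) {X Y : Ω → Fin d → ℝ}
    (hX : Measurable X) (hY : Measurable Y) (hXY : P.map X = P.map Y) :
    ∫ ω, gridCharDiff m (X ω, Y ω) ∂P = 0 := by
  have character_meas := measurable_torusChar_gridRound (N := N) m
  have character_int {W : Ω → Fin d → ℝ} (hW : Measurable W) :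
      Integrable (fun ω => torusChar m (gridRound N (W ω))) P :=
    .of_bound (character_meas.comp hW).aestronglyMeasurable 1
      (ae_of_all _ fun ω => (AddChar.norm_apply _ _).le)
  have law_eq : ∫ ω, torusChar m (gridRound N (X ω)) ∂P = ∫ ω, torusChar m (gridRound N (Y ω)) ∂P :=
    calc _ = ∫ x, torusChar m (gridRound N x) ∂(P.map X) :=
          (integral_map hX.aemeasurable character_meas.aestronglyMeasurable).symm
      _ = _ := by rw [hXY, integral_map hY.aemeasurable character_meas.aestronglyMeasurable]
  exact (integral_sub (character_int hX) (character_int hY)).trans (sub_eq_zero.2 law_eq)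

variable {X Y : ℕ → Ω → Fin d → ℝ} {A : ℝ} {n : ℕ}

lemma integrable_norm_sum_gridCharDiff_sq (hX : ∀ k, Measurable (X k)) (hY : ∀ k, Measurable (Y k))
    (m : Fin d → ZMod (2 * N)) :
    Integrable (fun ω => ‖∑ k ∈ Finset.range n, gridCharDiff m (X k ω, Y k ω)‖ ^ 2) P := by
  have meas : Measurable fun ω => ‖∑ k ∈ Finset.range n, gridCharDiff m (X k ω, Y k ω)‖ ^ 2 :=
    ((Finset.measurable_fun_sum _ fun k _ =>
      (measurable_gridCharDiff m).comp ((hX k).prodMk (hY k))).norm).pow_const 2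
  refine .of_bound meas.aestronglyMeasurable ((n * 2 : ℝ) ^ 2) (ae_of_all _ fun ω => ?_)
  rw [norm_pow, norm_norm]
  gcongr
  simpa using norm_sum_le_of_le (Finset.range n) fun k _ => norm_gridCharDiff_le m (X k ω, Y k ω)

lemma integral_sum_norm_sq_div_supFreq_sq_le (hX : ∀ k, Measurable (X k))
    (hY : ∀ k, Measurable (Y k)) (hXY : ∀ k, P.map (X k) = P.map (Y k))
    (hs : Summable fun ℓ => mixingSeq P (fun k ω => (X k ω, Y k ω)) (ℓ + 1))
    (hA : ∑' ℓ, mixingSeq P (fun k ω => (X k ω, Y k ω)) (ℓ + 1) ≤ A) :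
    ∫ ω, ∑ m : Fin d → ZMod (2 * N),
        ‖∑ k ∈ Finset.range n, gridCharDiff m (X k ω, Y k ω)‖ ^ 2 / (supFreq m : ℝ) ^ 2 ∂P
      ≤ n * (2 ^ 2 * (1 + 32 * A)) * (d * (2 * 3 ^ (d - 1)) * shellSum d N) := by
  have A_nonneg : 0 ≤ A := (tsum_nonneg fun ℓ => mixingSeq_nonneg P _ (ℓ + 1)).trans hA
  have second_moment (m : Fin d → ZMod (2 * N)) :
      ∫ ω, ‖∑ k ∈ Finset.range n, gridCharDiff m (X k ω, Y k ω)‖ ^ 2 ∂P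
        ≤ n * (2 ^ 2 * (1 + 32 * A)) := by
    refine (integral_norm_sum_sq_le_mixingSeq (Z := fun k ω => (X k ω, Y k ω))
      (fun k => (hX k).prodMk (hY k)) (measurable_gridCharDiff m) (norm_gridCharDiff_le m)
      (fun k => integral_gridCharDiff_eq_zero m (hX k) (hY k) (hXY k)) hs n).trans ?_
    gcongr
  calc _ = ∑ m : Fin d → ZMod (2 * N),
          (∫ ω, ‖∑ k ∈ Finset.range n, gridCharDiff m (X k ω, Y k ω)‖ ^ 2 ∂P)
            / (supFreq m : ℝ) ^ 2 := by
        rw [integral_finsetSum _ fun m _ =>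
          (integrable_norm_sum_gridCharDiff_sq hX hY m).div_const _]
        simp only [integral_div]
    _ ≤ ∑ m : Fin d → ZMod (2 * N), n * (2 ^ 2 * (1 + 32 * A)) * ((supFreq m : ℝ) ^ 2)⁻¹ := by
        simp only [div_eq_mul_inv]
        gcongr with m
        exact second_moment m
    _ ≤ _ := by
        have shells := sum_inv_supFreq_sq_le (M := 2 * N) (ι := Fin d)
        rw [Fintype.card_fin, Nat.mul_div_cancel_left N two_pos] at shells
        rw [← Finset.mul_sum]
        gcongr

/-- The constant in front of `shellSum d N / n` in the bound for the squared mean fluctuation of two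
samples of size `n` rounded to the grid of mesh `1/N` in dimension `d`, where `A` bounds the sum of
the mixing coefficients. -/
def fluctuationConst (d : ℕ) (A : ℝ) : ℝ := 2 * d ^ 2 * 3 ^ (d - 1) * (1 + 32 * A)

lemma fluctuationConst_nonneg (d : ℕ) (hA : 0 ≤ A) : 0 ≤ fluctuationConst d A := by
  unfold fluctuationConst
  positivity

lemma inv_mul_sqrt_second_moment_eq (A s : ℝ) (hn : n ≠ 0) :
    (n : ℝ)⁻¹ * (√d / 2 * √(n * (2 ^ 2 * (1 + 32 * A)) * (d * (2 * 3 ^ (d - 1)) * s)))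
      = √(fluctuationConst d A * (s / n)) := by
  have prefactor : (n : ℝ)⁻¹ * (√d / 2) = √((n : ℝ)⁻¹ ^ 2 * (d / 2 ^ 2)) := by
    rw [Real.sqrt_mul (by positivity), Real.sqrt_sq (by positivity),
      Real.sqrt_div (by positivity), Real.sqrt_sq two_pos.le]
  rw [← mul_assoc, prefactor, ← Real.sqrt_mul (by positivity), fluctuationConst]
  congr 1
  field_simp

theorem lintegral_W1_empMeasure_le (hX : ∀ k, Measurable (X k)) (hY : ∀ k, Measurable (Y k))
    (X_mem : ∀ k ω i, X k ω i ∈ Set.Icc (0 : ℝ) 1) (Y_mem : ∀ k ω i, Y k ω i ∈ Set.Icc (0 : ℝ) 1)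
    (hXY : ∀ k, P.map (X k) = P.map (Y k))
    (hs : Summable fun ℓ => mixingSeq P (fun k ω => (X k ω, Y k ω)) (ℓ + 1))
    (hA : ∑' ℓ, mixingSeq P (fun k ω => (X k ω, Y k ω)) (ℓ + 1) ≤ A) (hn : n ≠ 0) :
    ∫⁻ ω, W1 (empMeasure X n ω) (empMeasure Y n ω) ∂P
      ≤ ENNReal.ofReal (2 * (√d * (N : ℝ)⁻¹) + √(fluctuationConst d A * (shellSum d N / n))) := by
  let S (ω : Ω) : ℝ := ∑ m : Fin d → ZMod (2 * N),
    ‖∑ k ∈ Finset.range n, gridCharDiff m (X k ω, Y k ω)‖ ^ 2 / (supFreq m : ℝ) ^ 2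
  have S_int : Integrable S P := integrable_finsetSum _ fun m _ =>
    (integrable_norm_sum_gridCharDiff_sq hX hY m).div_const _
  have S_nonneg (ω : Ω) : 0 ≤ S ω := by positivity
  have sqrt_int := integrable_sqrt S_nonneg S_int
  have bound_int : Integrable (fun ω => 2 * (√d * (N : ℝ)⁻¹) + (n : ℝ)⁻¹ * (√d / 2 * √(S ω))) P :=
    (integrable_const _).add ((sqrt_int.const_mul _).const_mul _)
  calc _ ≤ ∫⁻ ω, ENNReal.ofReal (2 * (√d * (N : ℝ)⁻¹) + (n : ℝ)⁻¹ * (√d / 2 * √(S ω))) ∂P :=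
        lintegral_mono fun ω => W1_empMeasure_le (fun k => X_mem k ω) (fun k => Y_mem k ω) hn
    _ = ENNReal.ofReal (2 * (√d * (N : ℝ)⁻¹) + (n : ℝ)⁻¹ * (√d / 2 * ∫ ω, √(S ω) ∂P)) := by
        rw [← ofReal_integral_eq_lintegral_ofReal bound_int (ae_of_all _ fun ω => by positivity),
          integral_add (integrable_const _) ((sqrt_int.const_mul _).const_mul _),
          integral_const, probReal_univ, one_smul, integral_const_mul, integral_const_mul]
    _ ≤ ENNReal.ofReal (2 * (√d * (N : ℝ)⁻¹) + (n : ℝ)⁻¹ * (√d / 2 *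
          √(n * (2 ^ 2 * (1 + 32 * A)) * (d * (2 * 3 ^ (d - 1)) * shellSum d N)))) := by
        gcongr
        exact (integral_sqrt_le_sqrt_integral S_nonneg S_int).trans
          (Real.sqrt_le_sqrt (integral_sum_norm_sq_div_supFreq_sq_le hX hY hXY hs hA))
    _ = _ := by rw [inv_mul_sqrt_second_moment_eq A _ hn]

end Mean

section Rates

lemma shellSum_one_le (N : ℕ) : shellSum 1 N ≤ 2 := by
  have range_eq : Finset.Icc 1 N = Finset.Ioo 0 (N + 1) := by
    ext r
    simp only [Finset.mem_Icc, Finset.mem_Ioo]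
    omega
  simpa [shellSum, range_eq] using sum_Ioo_inv_sq_le (α := ℝ) 0 (N + 1)

lemma shellSum_two_le (N : ℕ) : shellSum 2 N ≤ 1 + Real.log N := by
  refine le_trans (le_of_eq ?_) (harmonic_le_one_add_log N)
  rw [harmonic_eq_sum_Icc, shellSum]
  push_cast
  refine Finset.sum_congr rfl fun r hr => ?_
  have r_pos : (0 : ℝ) < r := mod_cast (Finset.mem_Icc.1 hr).1
  field_simp

lemma shellSum_le_pow {d : ℕ} (hd : 3 ≤ d) (N : ℕ) : shellSum d N ≤ (N : ℝ) ^ (d - 2) := by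
  obtain ⟨e, rfl⟩ := Nat.exists_eq_add_of_le' hd
  calc shellSum (e + 3) N ≤ ∑ _r ∈ Finset.Icc 1 N, (N : ℝ) ^ e := by
        refine Finset.sum_le_sum fun r hr => ?_
        obtain ⟨r_pos, r_le⟩ := Finset.mem_Icc.1 hr
        have r_ne : (r : ℝ) ≠ 0 := mod_cast (by omega : r ≠ 0)
        rw [show e + 3 - 1 = e + 2 by omega, pow_add, mul_div_cancel_right₀ _ (pow_ne_zero 2 r_ne)]
        gcongr
    _ = (N : ℝ) ^ (e + 3 - 2) := by
        rw [Finset.sum_const, Nat.card_Icc, nsmul_eq_mul, show e + 3 - 2 = e + 1 by omega]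
        simp [pow_succ']

/-- The mesh `1/N` balances the two errors of a sample of size `n` in dimension `d`: rounding
contributes `O(1/N)` and the fluctuation of the rounded sample `O(√(shellSum d N / n))`, and both
are `O(ρ)`. -/
structure IsBalancedMesh (d n : ℕ) (ρ : ℝ) (N : ℕ) : Prop where
  ne_zero : N ≠ 0
  inv_le : (N : ℝ)⁻¹ ≤ 2 * ρ
  shellSum_div_le : shellSum d N / n ≤ 2 ^ d * ρ ^ 2

lemma isBalancedMesh_one {n : ℕ} (hn : n ≠ 0) : IsBalancedMesh 1 n (√n)⁻¹ n where
  ne_zero := hn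
  inv_le := by
    have one_le : (1 : ℝ) ≤ n := mod_cast Nat.one_le_iff_ne_zero.2 hn
    have sqrt_inv_le : (n : ℝ)⁻¹ ≤ (√n)⁻¹ :=
      inv_anti₀ (by positivity) (Real.sqrt_le_self_iff.2 (.inr one_le))
    linarith [inv_nonneg.2 (Real.sqrt_nonneg n)]
  shellSum_div_le := by
    rw [inv_pow, Real.sq_sqrt n.cast_nonneg, pow_one, ← div_eq_mul_inv]
    gcongr
    exact shellSum_one_le n

lemma isBalancedMesh_two {n : ℕ} (hn : 2 ≤ n) :
    IsBalancedMesh 2 n √(Real.log n / n) n := by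
  have two_le : (2 : ℝ) ≤ n := mod_cast hn
  have half_le_log : 1 / 2 ≤ Real.log n := by
    linarith [Real.log_two_gt_d9, Real.log_le_log two_pos two_le]
  refine ⟨by omega, ?_, ?_⟩
  · have sq_le : ((n : ℝ)⁻¹) ^ 2 ≤ 2 ^ 2 * (Real.log n / n) := by
      field_simp
      nlinarith
    calc (n : ℝ)⁻¹ ≤ √(2 ^ 2 * (Real.log n / n)) := Real.le_sqrt_of_sq_le sq_le
      _ = 2 * √(Real.log n / n) := by rw [Real.sqrt_mul (by positivity), Real.sqrt_sq two_pos.le]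
  · rw [Real.sq_sqrt (by positivity), ← mul_div_assoc]
    gcongr
    linarith [shellSum_two_le n]

lemma isBalancedMesh_of_three_le {d n : ℕ} (hd : 3 ≤ d) (hn : n ≠ 0) :
    IsBalancedMesh d n ((n : ℝ) ^ (1 / d : ℝ))⁻¹ ⌈(n : ℝ) ^ (1 / d : ℝ)⌉₊ := by
  have one_le_n : (1 : ℝ) ≤ n := mod_cast Nat.one_le_iff_ne_zero.2 hn
  have root_pow : ((n : ℝ) ^ (1 / d : ℝ)) ^ d = n := by
    rw [one_div, Real.rpow_inv_natCast_pow n.cast_nonneg (by omega)]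
  have one_le : 1 ≤ (n : ℝ) ^ (1 / d : ℝ) := Real.one_le_rpow one_le_n (by positivity)
  generalize (n : ℝ) ^ (1 / d : ℝ) = t at root_pow one_le
  have t_pos : 0 < t := one_pos.trans_le one_le
  refine ⟨(Nat.ceil_pos.2 t_pos).ne', ?_, ?_⟩
  · linarith [inv_anti₀ t_pos (Nat.le_ceil t), inv_pos.2 t_pos]
  · have ceil_le : (⌈t⌉₊ : ℝ) ≤ 2 * t := by linarith [Nat.ceil_lt_add_one t_pos.le]
    calc shellSum d ⌈t⌉₊ / n ≤ (2 * t) ^ (d - 2) / n := by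
          gcongr
          exact (shellSum_le_pow hd _).trans (by gcongr)
      _ = 2 ^ (d - 2) * t⁻¹ ^ 2 := by
          obtain ⟨e, rfl⟩ := Nat.exists_eq_add_of_le' (show 2 ≤ d by omega)
          rw [← root_pow, Nat.add_sub_cancel, mul_pow, pow_add]
          field_simp
      _ ≤ 2 ^ d * t⁻¹ ^ 2 := by
          gcongr
          · norm_num
          · omega

/-- The constant of the rate `ρ` given by a balanced mesh. -/
def rateConst (d : ℕ) (A : ℝ) : ℝ := 4 * √d + √(2 ^ d * fluctuationConst d A)

lemma IsBalancedMesh.nonneg {d n N : ℕ} {ρ : ℝ} (mesh : IsBalancedMesh d n ρ N) : 0 ≤ ρ := by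
  linarith [mesh.inv_le, inv_nonneg.2 (Nat.cast_nonneg (α := ℝ) N)]

lemma IsBalancedMesh.error_le {d n N : ℕ} {ρ A : ℝ} (mesh : IsBalancedMesh d n ρ N) (hA : 0 ≤ A) :
    2 * (√d * (N : ℝ)⁻¹) + √(fluctuationConst d A * (shellSum d N / n)) ≤ rateConst d A * ρ := by
  have K_nonneg := fluctuationConst_nonneg d hA
  calc _ ≤ 2 * (√d * (2 * ρ)) + √(fluctuationConst d A * (2 ^ d * ρ ^ 2)) := by
        gcongr
        exacts [mesh.inv_le, mesh.shellSum_div_le]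
    _ = rateConst d A * ρ := by
        rw [← mul_assoc (fluctuationConst d A), Real.sqrt_mul (by positivity),
          Real.sqrt_sq mesh.nonneg, mul_comm (fluctuationConst d A), rateConst]
        ring

end Rates

/-- Corollary 4: under a summable mixing sequence, the rates of Theorem 3 remain
valid, with a constant depending only on `d` and on the sum of the mixing
coefficients. -/
theorem expected_W1_rate_mixing (d : ℕ) (A : ℝ) :
    ∃ C : ℝ, 0 < C ∧
      ∀ (Ω : Type) (_ : MeasurableSpace Ω) (P : Measure Ω), IsProbabilityMeasure P →
      ∀ (X Y : ℕ → Ω → (Fin d → ℝ)),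
        (∀ k, Measurable (X k)) → (∀ k, Measurable (Y k)) →
        (∀ k ω i, X k ω i ∈ Set.Icc (0 : ℝ) 1) →
        (∀ k ω i, Y k ω i ∈ Set.Icc (0 : ℝ) 1) →
        (∀ k, P.map (X k) = P.map (Y k)) →
        Summable (fun ℓ => mixingSeq P (fun k ω => (X k ω, Y k ω)) (ℓ + 1)) →
        (∑' ℓ : ℕ, mixingSeq P (fun k ω => (X k ω, Y k ω)) (ℓ + 1)) ≤ A →
        ∀ (n : ℕ), 2 ≤ n →
          (d = 1 →
            ∫⁻ ω, W1 (empMeasure X n ω) (empMeasure Y n ω) ∂P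
              ≤ ENNReal.ofReal (C / Real.sqrt n)) ∧
          (d = 2 →
            ∫⁻ ω, W1 (empMeasure X n ω) (empMeasure Y n ω) ∂P
              ≤ ENNReal.ofReal (C * Real.sqrt (Real.log n / n))) ∧
          (3 ≤ d →
            ∫⁻ ω, W1 (empMeasure X n ω) (empMeasure Y n ω) ∂P
              ≤ ENNReal.ofReal (C / (n : ℝ) ^ (1 / d : ℝ))) := by
  refine ⟨rateConst d A + 1, by unfold rateConst; positivity, ?_⟩
  intro Ω _ P _ X Y hX hY X_mem Y_mem hXY hs hA n hn
  have A_nonneg : 0 ≤ A := (tsum_nonneg fun ℓ => mixingSeq_nonneg P _ (ℓ + 1)).trans hA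
  have rate_of_mesh {ρ : ℝ} {N : ℕ} (mesh : IsBalancedMesh d n ρ N) :
      ∫⁻ ω, W1 (empMeasure X n ω) (empMeasure Y n ω) ∂P
        ≤ ENNReal.ofReal ((rateConst d A + 1) * ρ) := by
    have : NeZero N := ⟨mesh.ne_zero⟩
    refine (lintegral_W1_empMeasure_le (N := N) hX hY X_mem Y_mem hXY hs hA (by omega)).trans
      (ENNReal.ofReal_le_ofReal ((mesh.error_le A_nonneg).trans ?_))
    linarith [mesh.nonneg]
  refine ⟨?_, ?_, fun hd => ?_⟩
  · rintro rfl
    exact rate_of_mesh (isBalancedMesh_one (by omega))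
  · rintro rfl
    exact rate_of_mesh (isBalancedMesh_two hn)
  · exact rate_of_mesh (isBalancedMesh_of_three_le hd (by omega))
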